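/- There exist absolute constants c > 0 and c′ > 0 such that for every prime power q and every point set P ⊆ 𝔽_q³ with |P| ≥ c·q, the number of 4-element subsets of P that are critical coplanar (affinely dependent with every 3-element subset affinely independent) is at least c′·|P|⁴/q. -/

import Mathlib

/-- A `4`-element subset of `𝔽_q³` is critical coplanar if it is affinely dependent
(coplanar) while every proper subset of it is affinely independent (no three of the four
points are collinear). -/
def IsCriticalCoplanar (F : Type*) [Field F] (t : Finset (Fin 3 → F)) : Prop :=
  t.card = 4 ∧ ¬ AffineIndependent F ((↑) : t → (Fin 3 → F)) ∧
    ∀ s : Finset (Fin 3 → F), s ⊂ t → AffineIndependent F ((↑) : s → (Fin 3 → F))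

/-!
Let `n = |P|`. A plane contains `n / q` points of `P` on average, and by the second moment method
at least half of the planes contain between `n / 2q` and `3n / 2q` of them. In such a plane most
quadruples of points of `P` are critical coplanar unless many triples are collinear, and these
triples span lines with at most `3n / 2q` points of `P`. So if there are few collinear triples on
such sparse lines altogether, summing over the planes gives the bound.

If there are many, then Cauchy-Schwarz provides many pairs of such triples `(o, a, b)`, `(o, c, d)`
with the same first point. Since the lines are sparse, only few of these pairs lie on a common line,
and each of the others yields a critical coplanar quadruple `a, b, c, d`, which determines `o` as
the intersection of two lines.
-/

open Finset Function

namespace AffineCircuit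

section Counting

variable {α β : Type*} {n : ℕ}

theorem sum_card_filter_le {s : Finset α} {t : Finset β} {m : ℕ} (r : α → β → Prop)
    [∀ a b, Decidable (r a b)] (h : ∀ b ∈ t, #{a ∈ s | r a b} ≤ m) :
    ∑ a ∈ s, #{b ∈ t | r a b} ≤ #t * m :=
  calc ∑ a ∈ s, #{b ∈ t | r a b}
      = ∑ b ∈ t, #{a ∈ s | r a b} := sum_card_bipartiteAbove_eq_sum_card_bipartiteBelow r
    _ ≤ #t * m := sum_le_card_nsmul t _ m h

theorem card_sq_le_card_mul_card_filter_apply_eq [DecidableEq β] {f : α → β} {s : Finset α}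
    {t : Finset β} (hf : Set.MapsTo f s t) :
    #s ^ 2 ≤ #t * #{x ∈ s ×ˢ s | f x.1 = f x.2} := by
  have sum_fibers : #s = ∑ b ∈ t, #{a ∈ s | f a = b} := card_eq_sum_card_fiberwise hf
  have sum_sq_fibers :
      ∑ b ∈ t, #{a ∈ s | f a = b} ^ 2 = #{x ∈ s ×ˢ s | f x.1 = f x.2} := by
    rw [card_eq_sum_card_fiberwise (f := fun x ↦ f x.1) (t := t)
      fun x hx ↦ hf (mem_product.1 (mem_filter.1 hx).1).1]
    refine sum_congr rfl fun b _ ↦ ?_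
    rw [sq, ← card_product, ← filter_product, filter_filter]
    congr 1
    grind
  calc #s ^ 2 = (∑ b ∈ t, #{a ∈ s | f a = b}) ^ 2 := by rw [← sum_fibers]
    _ ≤ #t * ∑ b ∈ t, #{a ∈ s | f a = b} ^ 2 := sq_sum_le_card_mul_sum_sq
    _ = _ := by rw [sum_sq_fibers]

theorem card_filter_apply_eq_apply_le [DecidableEq α] (s : Finset α) {i j : Fin (n + 1)}
    (hij : i ≠ j) : #{f ∈ Fintype.piFinset fun _ : Fin (n + 1) ↦ s | f i = f j} ≤ #s ^ n := by
  obtain ⟨l, rfl⟩ := Fin.exists_succAbove_eq hij.symm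
  rw [← Fintype.card_piFinset_const]
  refine card_le_card_of_injOn i.removeNth (fun f hf ↦ ?_) fun f hf g hg hfg ↦ ?_
  · simp only [coe_filter, Fintype.mem_piFinset, Set.mem_ofPred_eq] at hf
    simp [Fin.removeNth, hf.1]
  · simp only [coe_filter, Fintype.mem_piFinset, Set.mem_ofPred_eq] at hf hg
    rw [← Fin.insertNth_self_removeNth i f, ← Fin.insertNth_self_removeNth i g, hfg, hf.2, hg.2]
    exact congrArg (fun x ↦ i.insertNth x _) (congrFun hfg l)

theorem card_filter_not_injective_le [DecidableEq α] (s : Finset α) :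
    #{f ∈ Fintype.piFinset fun _ : Fin (n + 1) ↦ s | ¬ Injective f} ≤ (n + 1) * n * #s ^ n := by
  calc #{f ∈ Fintype.piFinset fun _ : Fin (n + 1) ↦ s | ¬ Injective f}
      ≤ #((univ : Finset (Fin (n + 1))).offDiag.biUnion fun x ↦
          {f ∈ Fintype.piFinset fun _ ↦ s | f x.1 = f x.2}) := by
        refine card_le_card fun f hf ↦ ?_
        obtain ⟨hfs, hf⟩ := mem_filter.1 hf
        obtain ⟨i, j, hfij, hij⟩ := not_injective_iff.1 hf
        exact mem_biUnion.2 ⟨(i, j), by simpa using hij, mem_filter.2 ⟨hfs, hfij⟩⟩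
    _ ≤ #(univ : Finset (Fin (n + 1))).offDiag * #s ^ n :=
        card_biUnion_le_card_mul _ _ _ fun x hx ↦
          card_filter_apply_eq_apply_le s (mem_offDiag.1 hx).2.2
    _ = (n + 1) * n * #s ^ n := by
        rw [offDiag_card, card_fin, Nat.mul_succ, Nat.add_sub_cancel]

theorem card_filter_exists_removeNth_le (s : Finset α) (p : (Fin n → α) → Prop)
    [DecidablePred p] :
    #{f ∈ Fintype.piFinset fun _ : Fin (n + 1) ↦ s | ∃ i : Fin (n + 1), p (i.removeNth f)}
      ≤ (n + 1) * (#s * #{g ∈ Fintype.piFinset fun _ : Fin n ↦ s | p g}) := by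
  classical
  calc #{f ∈ Fintype.piFinset fun _ : Fin (n + 1) ↦ s | ∃ i : Fin (n + 1), p (i.removeNth f)}
      ≤ #((univ : Finset (Fin (n + 1))).biUnion fun i ↦
          {f ∈ Fintype.piFinset fun _ : Fin (n + 1) ↦ s | p (i.removeNth f)}) := by
        refine card_le_card fun f hf ↦ ?_
        simpa using hf
    _ ≤ #(univ : Finset (Fin (n + 1))) *
          (#s * #{g ∈ Fintype.piFinset fun _ : Fin n ↦ s | p g}) := by
        refine card_biUnion_le_card_mul _ _ _ fun i _ ↦ ?_
        rw [← card_product]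
        refine card_le_card_of_injOn (fun f ↦ (f i, i.removeNth f)) (fun f hf ↦ ?_)
          fun f _ g _ hfg ↦ ?_
        · simp only [coe_filter, Fintype.mem_piFinset, Set.mem_ofPred_eq] at hf
          simpa [hf.2] using ⟨hf.1 i, fun j ↦ hf.1 _⟩
        · obtain ⟨hi, hrest⟩ := Prod.mk.inj hfg
          rw [← Fin.insertNth_self_removeNth i f, ← Fin.insertNth_self_removeNth i g, hi, hrest]
    _ = _ := by rw [card_fin]

theorem card_filter_lt_abs_sub_mul_sq_le [Fintype α] (f : α → ℝ) (m : ℝ) {ε : ℝ} (hε : 0 ≤ ε) :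
    #{a | ε < |f a - m|} * ε ^ 2 ≤ ∑ a, (f a - m) ^ 2 :=
  calc #{a | ε < |f a - m|} * ε ^ 2
      ≤ ∑ a with ε < |f a - m|, (f a - m) ^ 2 := by
        rw [← nsmul_eq_mul]
        refine card_nsmul_le_sum _ _ _ fun a ha ↦ ?_
        rw [← sq_abs (f a - m)]
        gcongr
        exact (mem_filter.1 ha).2.le
    _ ≤ ∑ a, (f a - m) ^ 2 :=
        sum_le_sum_of_subset_of_nonneg (filter_subset _ _) fun _ _ _ ↦ sq_nonneg _

end Counting

section Affine

variable {k V P : Type*} {n : ℕ} [DivisionRing k] [AddCommGroup V] [Module k V] [AddTorsor V P]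

theorem collinear_union {s t : Set P} (hs : Collinear k s) (ht : Collinear k t) {x y : P}
    (hx : x ∈ s ∩ t) (hy : y ∈ s ∩ t) (hxy : x ≠ y) : Collinear k (s ∪ t) := by
  have hline : Collinear k (line[k, x, y] : Set P) := by
    rw [Collinear, ← AffineSubspace.direction_eq_vectorSpan, direction_affineSpan]
    exact collinear_pair k x y
  refine hline.subset (Set.union_subset ?_ ?_)
  · exact fun z hz ↦ hs.mem_affineSpan_of_mem_of_ne hx.1 hy.1 hz hxy
  · exact fun z hz ↦ ht.mem_affineSpan_of_mem_of_ne hx.2 hy.2 hz hxy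

theorem not_collinear_of_crossing_lines {l m s : Set P} (hl : Collinear k l) (hm : Collinear k m)
    (hlm : ¬ Collinear k (l ∪ m)) {o a b c : P} (ho : o ∈ l ∩ m) (ha : a ∈ s ∩ l) (hb : b ∈ s ∩ l)
    (hab : a ≠ b) (hc : c ∈ s ∩ m) (hoc : o ≠ c) : ¬ Collinear k s := by
  intro hs
  have hsl : Collinear k (s ∪ l) := collinear_union hs hl ha hb hab
  have hslm : Collinear k ((s ∪ l) ∪ m) :=
    collinear_union hsl hm ⟨.inr ho.1, ho.2⟩ ⟨.inl hc.1, hc.2⟩ hoc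
  exact hlm (hslm.subset (Set.union_subset_union_left m Set.subset_union_right))

theorem not_affineIndependent_of_coplanar {s : Set P} (hs : Coplanar k s) {p : Fin 4 → P}
    (hp : ∀ i, p i ∈ s) : ¬ AffineIndependent k p := by
  have hrange : Coplanar k (Set.range p) := hs.subset (Set.range_subset_iff.2 hp)
  have := hrange.finiteDimensional_vectorSpan
  exact (finrank_vectorSpan_le_iff_not_affineIndependent k p (Fintype.card_fin 4)).1
    (coplanar_iff_finrank_le_two.1 hrange)

variable (k) in
/-- A tuple of points which is affinely dependent while all its subtuples obtained by deleting one
entry are affinely independent, i.e. an ordered circuit of the affine matroid. The ordered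
counterpart of `IsCriticalCoplanar`. -/
def IsAffineCircuit (p : Fin (n + 1) → P) : Prop :=
  ¬ AffineIndependent k p ∧ ∀ i : Fin (n + 1), AffineIndependent k (i.removeNth p)

theorem IsAffineCircuit.injective {p : Fin (n + 3) → P} (hp : IsAffineCircuit k p) :
    Injective p := by
  intro i j hij
  obtain ⟨l, hli, hlj⟩ := Fin.exists_ne_and_ne_of_two_lt i j (by lia)
  obtain ⟨i', rfl⟩ := Fin.exists_succAbove_eq hli.symm
  obtain ⟨j', rfl⟩ := Fin.exists_succAbove_eq hlj.symm
  rw [(hp.2 l).injective hij]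

theorem isAffineCircuit_of_crossing_lines {o a b c d : P} (hab : a ≠ b) (hob : o ≠ b)
    (hcd : c ≠ d) (hod : o ≠ d) (h₁ : Collinear k {o, a, b}) (h₂ : Collinear k {o, c, d})
    (h : ¬ Collinear k {o, a, c}) : IsAffineCircuit k ![a, b, c, d] := by
  have hoa : o ≠ a := ne₁₂_of_not_collinear h
  have hoc : o ≠ c := ne₁₃_of_not_collinear h
  constructor
  · have hb : b ∈ affineSpan k {o, a, c} := affineSpan_mono k (by simp [Set.insert_subset_iff])
      (h₁.mem_affineSpan_of_mem_of_ne (p₁ := o) (p₂ := a) (by simp) (by simp) (by simp) hoa)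
    have hd : d ∈ affineSpan k {o, a, c} := affineSpan_mono k (by simp [Set.insert_subset_iff])
      (h₂.mem_affineSpan_of_mem_of_ne (p₁ := o) (p₂ := c) (by simp) (by simp) (by simp) hoc)
    have hplane : Coplanar k (insert b (insert d {o, a, c})) := by
      rw [coplanar_insert_iff_of_mem_affineSpan (affineSpan_mono k (by simp) hb),
        coplanar_insert_iff_of_mem_affineSpan hd]
      exact coplanar_triple k o a c
    exact not_affineIndependent_of_coplanar hplane (by simp [Fin.forall_fin_succ])
  · have hlm : ¬ Collinear k ({o, a, b} ∪ {o, c, d} : Set P) :=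
      fun hc ↦ h (hc.subset (by simp [Set.insert_subset_iff]))
    have hml : ¬ Collinear k ({o, c, d} ∪ {o, a, b} : Set P) := by rwa [Set.union_comm]
    intro i
    rw [affineIndependent_iff_not_collinear]
    have hmem (j : Fin 3) : ![a, b, c, d] (i.succAbove j) ∈ Set.range (i.removeNth ![a, b, c, d]) :=
      Set.mem_range_self j
    fin_cases i
    · exact not_collinear_of_crossing_lines (o := o) (a := c) (b := d) (c := b) h₂ h₁ hml (by simp)
        ⟨hmem 1, by simp⟩ ⟨hmem 2, by simp⟩ hcd ⟨hmem 0, by simp⟩ hob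
    · exact not_collinear_of_crossing_lines (o := o) (a := c) (b := d) (c := a) h₂ h₁ hml (by simp)
        ⟨hmem 1, by simp⟩ ⟨hmem 2, by simp⟩ hcd ⟨hmem 0, by simp⟩ hoa
    · exact not_collinear_of_crossing_lines (o := o) (a := a) (b := b) (c := d) h₁ h₂ hlm (by simp)
        ⟨hmem 0, by simp⟩ ⟨hmem 1, by simp⟩ hab ⟨hmem 2, by simp⟩ hod
    · exact not_collinear_of_crossing_lines (o := o) (a := a) (b := b) (c := c) h₁ h₂ hlm (by simp)
        ⟨hmem 0, by simp⟩ ⟨hmem 1, by simp⟩ hab ⟨hmem 2, by simp⟩ hoc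

variable (k)

open scoped Classical in
/-- The ordered affine circuits of length `n + 1` with entries in `s`. -/
noncomputable def affineCircuits (n : ℕ) (s : Finset P) : Finset (Fin (n + 1) → P) :=
  {p ∈ Fintype.piFinset fun _ ↦ s | IsAffineCircuit k p}

open scoped Classical in
/-- The ordered triples of distinct collinear points of `s`. -/
noncomputable def collinearTriples (s : Finset P) : Finset (Fin 3 → P) :=
  {t ∈ Fintype.piFinset fun _ ↦ s | Injective t ∧ Collinear k (Set.range t)}

open scoped Classical in
/-- The ordered triples of distinct collinear points of `s` on lines with at most `K` points
of `s`. -/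
noncomputable def sparseCollinearTriples (s : Finset P) (K : ℕ) : Finset (Fin 3 → P) :=
  {t ∈ collinearTriples k s | #{x ∈ s | x ∈ line[k, t 0, t 1]} ≤ K}

variable {k}

theorem mem_affineCircuits {s : Finset P} {p : Fin (n + 1) → P} :
    p ∈ affineCircuits k n s ↔ (∀ i, p i ∈ s) ∧ IsAffineCircuit k p := by
  simp [affineCircuits]

theorem mem_collinearTriples {s : Finset P} {t : Fin 3 → P} :
    t ∈ collinearTriples k s ↔ (∀ i, t i ∈ s) ∧ Injective t ∧ Collinear k (Set.range t) := by
  simp [collinearTriples]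

open scoped Classical in
theorem mem_sparseCollinearTriples {s : Finset P} {K : ℕ} {t : Fin 3 → P} :
    t ∈ sparseCollinearTriples k s K ↔
      t ∈ collinearTriples k s ∧ #{x ∈ s | x ∈ line[k, t 0, t 1]} ≤ K := by
  simp [sparseCollinearTriples]

open scoped Classical in
theorem card_not_affineIndependent_triples_le (s : Finset P) :
    #{t ∈ Fintype.piFinset fun _ : Fin 3 ↦ s | ¬ AffineIndependent k t}
      ≤ 6 * #s ^ 2 + #(collinearTriples k s) := by
  calc #{t ∈ Fintype.piFinset fun _ : Fin 3 ↦ s | ¬ AffineIndependent k t}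
      ≤ #({t ∈ Fintype.piFinset fun _ : Fin 3 ↦ s | ¬ Injective t} ∪ collinearTriples k s) := by
        refine card_le_card fun t ht ↦ ?_
        rw [mem_filter, affineIndependent_iff_not_collinear, not_not, Fintype.mem_piFinset] at ht
        rw [mem_union, mem_filter, Fintype.mem_piFinset, mem_collinearTriples]
        tauto
    _ ≤ 6 * #s ^ 2 + #(collinearTriples k s) :=
        (card_union_le _ _).trans (Nat.add_le_add_right (card_filter_not_injective_le s) _)

theorem card_pow_four_le_of_coplanar {s : Finset P} (hs : Coplanar k (s : Set P)) :
    #s ^ 4 ≤ #(affineCircuits k 3 s) + 24 * #s ^ 3 + 4 * #s * #(collinearTriples k s) := by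
  classical
  calc #s ^ 4 = #(Fintype.piFinset fun _ : Fin 4 ↦ s) := (Fintype.card_piFinset_const s 4).symm
    _ ≤ #(affineCircuits k 3 s ∪ {p ∈ Fintype.piFinset fun _ : Fin 4 ↦ s |
          ∃ i : Fin 4, ¬ AffineIndependent k (i.removeNth p)}) := by
        refine card_le_card fun p hp ↦ ?_
        have hps : ∀ i, p i ∈ s := Fintype.mem_piFinset.1 hp
        have hdep : ¬ AffineIndependent k p := not_affineIndependent_of_coplanar hs hps
        rw [mem_union, mem_affineCircuits, mem_filter, IsAffineCircuit, ← not_forall]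
        tauto
    _ ≤ #(affineCircuits k 3 s) + 4 * (#s * (6 * #s ^ 2 + #(collinearTriples k s))) := by
        refine (card_union_le _ _).trans (Nat.add_le_add_left ?_ _)
        refine (card_filter_exists_removeNth_le s fun t ↦ ¬ AffineIndependent k t).trans ?_
        gcongr
        exact card_not_affineIndependent_triples_le s
    _ = _ := by ring


open scoped Classical in
theorem card_concurrent_collinear_le (s : Finset P) (K : ℕ) :
    #{x ∈ sparseCollinearTriples k s K ×ˢ sparseCollinearTriples k s K |
        x.1 0 = x.2 0 ∧ Collinear k {x.1 0, x.1 1, x.2 1}}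
      ≤ K ^ 2 * #(sparseCollinearTriples k s K) := by
  refine card_le_mul_card_image_of_maps_to (f := Prod.fst)
    (fun x hx ↦ (mem_product.1 (mem_filter.1 hx).1).1) _ fun t ht ↦ ?_
  set L : Finset P := {x ∈ s | x ∈ line[k, t 0, t 1]} with hL
  obtain ⟨ht, hLK⟩ := mem_sparseCollinearTriples.1 ht
  have htinj : Injective t := (mem_collinearTriples.1 ht).2.1
  calc _ ≤ #(L ×ˢ L) := by
        refine card_le_card_of_injOn (fun x ↦ (x.2 1, x.2 2)) ?_ ?_
        · rintro ⟨t', u⟩ hx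
          obtain ⟨⟨⟨-, hu⟩, htu, hcol⟩, rfl⟩ := by
            simpa only [coe_filter, Set.mem_ofPred_eq, mem_filter, mem_product] using hx
          obtain ⟨hus, huinj, hucol⟩ := mem_collinearTriples.1 (mem_sparseCollinearTriples.1 hu).1
          have hline : Collinear k ({t' 0, t' 1, u 1} ∪ Set.range u) :=
            collinear_union hcol hucol (x := u 0) (y := u 1) (by simp [htu]) (by simp)
              (huinj.ne (by decide))
          have hmem (i : Fin 3) : u i ∈ line[k, t' 0, t' 1] :=
            hline.mem_affineSpan_of_mem_of_ne (by simp) (by simp) (by simp)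
              (htinj.ne (by decide))
          simp [hL, hus, hmem]
        · rintro ⟨t', u⟩ hx ⟨t'', u'⟩ hy huu'
          obtain ⟨⟨-, htu, -⟩, rfl⟩ := by
            simpa only [coe_filter, Set.mem_ofPred_eq, mem_filter] using hx
          obtain ⟨⟨-, htu', -⟩, rfl⟩ := by
            simpa only [coe_filter, Set.mem_ofPred_eq, mem_filter] using hy
          obtain ⟨h₁, h₂⟩ : u 1 = u' 1 ∧ u 2 = u' 2 := Prod.mk.inj huu'
          have h₀ : u 0 = u' 0 := htu.symm.trans htu'
          rw [show u = u' from funext (by simp [Fin.forall_fin_succ, h₀, h₁, h₂])]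
    _ ≤ K ^ 2 := by rw [card_product, ← sq]; gcongr

theorem apex_eq_of_not_collinear {t t' u u' : Fin 3 → P} (ht : Collinear k (Set.range t))
    (ht' : Collinear k (Set.range t')) (hu : Collinear k (Set.range u))
    (hu' : Collinear k (Set.range u')) (htu : t 0 = u 0) (htu' : t' 0 = u' 0)
    (htt' : Set.EqOn t t' {1, 2}) (huu' : Set.EqOn u u' {1, 2}) (ht₁₂ : t 1 ≠ t 2)
    (hu₁₂ : u 1 ≠ u 2) (h : ¬ Collinear k {t 0, t 1, u 1}) : t 0 = t' 0 := by
  by_contra hne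
  have hline {v v' : Fin 3 → P} (hv : Collinear k (Set.range v)) (hv' : Collinear k (Set.range v'))
      (hvv' : Set.EqOn v v' {1, 2}) (hv₁₂ : v 1 ≠ v 2) :
      Collinear k (Set.range v ∪ Set.range v') :=
    collinear_union hv hv' ⟨⟨1, rfl⟩, 1, (hvv' (by simp)).symm⟩
      ⟨⟨2, rfl⟩, 2, (hvv' (by simp)).symm⟩ hv₁₂
  have hall := collinear_union (hline ht ht' htt' ht₁₂) (hline hu hu' huu' hu₁₂)
    ⟨.inl ⟨0, rfl⟩, .inl ⟨0, htu.symm⟩⟩ ⟨.inr ⟨0, rfl⟩, .inr ⟨0, htu'.symm⟩⟩ hne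
  exact h (hall.subset (by simp [Set.insert_subset_iff]))

open scoped Classical in
theorem card_concurrent_not_collinear_le (s : Finset P) :
    #{x ∈ collinearTriples k s ×ˢ collinearTriples k s |
        x.1 0 = x.2 0 ∧ ¬ Collinear k {x.1 0, x.1 1, x.2 1}} ≤ #(affineCircuits k 3 s) := by
  refine card_le_card_of_injOn (fun x ↦ ![x.1 1, x.1 2, x.2 1, x.2 2]) ?_ ?_
  · rintro ⟨t, u⟩ hx
    obtain ⟨⟨ht, hu⟩, htu, h⟩ := by
      simpa only [coe_filter, Set.mem_ofPred_eq, mem_product, mem_collinearTriples] using hx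
    obtain ⟨hts, htinj, htcol⟩ := ht
    obtain ⟨hus, huinj, hucol⟩ := hu
    refine mem_affineCircuits.2 ⟨by simp [Fin.forall_fin_succ, hts, hus],
      isAffineCircuit_of_crossing_lines (o := t 0) (htinj.ne (by decide)) (htinj.ne (by decide))
      (huinj.ne (by decide)) ?_ (htcol.subset (by simp [Set.insert_subset_iff]))
      (hucol.subset (by simp [Set.insert_subset_iff, htu])) h⟩
    exact htu ▸ huinj.ne (by decide)
  · rintro ⟨t, u⟩ hx ⟨t', u'⟩ hy hxy
    obtain ⟨⟨⟨-, htinj, ht⟩, -, huinj, hu⟩, htu, h⟩ := by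
      simpa only [coe_filter, Set.mem_ofPred_eq, mem_product, mem_collinearTriples] using hx
    obtain ⟨⟨⟨-, -, ht'⟩, -, -, hu'⟩, htu', -⟩ := by
      simpa only [coe_filter, Set.mem_ofPred_eq, mem_product, mem_collinearTriples] using hy
    obtain ⟨ht₁, ht₂, hu₁, hu₂⟩ : t 1 = t' 1 ∧ t 2 = t' 2 ∧ u 1 = u' 1 ∧ u 2 = u' 2 := by
      simpa using hxy
    have ho : t 0 = t' 0 := apex_eq_of_not_collinear ht ht' hu hu' htu htu'
      (by simp [Set.EqOn, ht₁, ht₂]) (by simp [Set.EqOn, hu₁, hu₂]) (htinj.ne (by decide))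
      (huinj.ne (by decide)) h
    have ho' : u 0 = u' 0 := by rw [← htu, ho, htu']
    exact Prod.ext (funext (by simp [Fin.forall_fin_succ, ho, ht₁, ht₂]))
      (funext (by simp [Fin.forall_fin_succ, ho', hu₁, hu₂]))

theorem card_sparseCollinearTriples_sq_le (s : Finset P) (K : ℕ) :
    #(sparseCollinearTriples k s K) ^ 2
      ≤ #s * (K ^ 2 * #(sparseCollinearTriples k s K) + #(affineCircuits k 3 s)) := by
  classical
  set T := sparseCollinearTriples k s K
  have hTC : T ⊆ collinearTriples k s := filter_subset _ _
  have hTs : Set.MapsTo (fun t : Fin 3 → P ↦ t 0) T s :=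
    fun t ht ↦ (mem_collinearTriples.1 (hTC ht)).1 0
  refine (card_sq_le_card_mul_card_filter_apply_eq hTs).trans (Nat.mul_le_mul_left _ ?_)
  rw [← card_filter_add_card_filter_not fun x ↦ Collinear k {x.1 0, x.1 1, x.2 1},
    filter_filter, filter_filter]
  refine add_le_add (card_concurrent_collinear_le s K) ?_
  exact (card_le_card (filter_subset_filter _ (product_subset_product hTC hTC))).trans
    (card_concurrent_not_collinear_le s)

end Affine

-- `n`, `T` and `Q` will count points, sparse collinear triples and circuits. `n ≤ q ^ 3` makes `q`
-- large, so that `n * K ^ 2 * T`, the contribution of the pairs of triples on a common line, is at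
-- most half of `T ^ 2`.
theorem pow_four_le_of_sq_le_mul {n q K T Q : ℝ} (hq : 0 < q) (hK : 0 ≤ K) (hT : 0 ≤ T)
    (hQ : 0 ≤ Q) (hqn : 2 ^ 24 * q ≤ n) (hnq : n ≤ q ^ 3) (hKn : K * q ≤ 3 / 2 * n)
    (hnT : n ^ 3 ≤ 768 * q * T) (h : T ^ 2 ≤ n * (K ^ 2 * T + Q)) : n ^ 4 ≤ 128 * Q * q := by
  have hn : 0 < n := by linarith
  have hq_large : 2 ^ 12 ≤ q := by
    have : 2 ^ 24 * q ≤ q ^ 2 * q := by linarith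
    have : (2 ^ 12) ^ 2 ≤ q ^ 2 := by linarith [le_of_mul_le_mul_right this hq]
    exact (sq_le_sq₀ (by norm_num) hq.le).1 this
  have collinear_part : n * K ^ 2 ≤ T / 2 := by
    have : n * K ^ 2 * q * q ≤ 1728 * T * q :=
      calc n * K ^ 2 * q * q = n * (K * q) ^ 2 := by ring
        _ ≤ n * (3 / 2 * n) ^ 2 := by gcongr
        _ = 9 / 4 * n ^ 3 := by ring
        _ ≤ 9 / 4 * (768 * q * T) := by gcongr
        _ = 1728 * T * q := by ring
    have : n * K ^ 2 * q ≤ 1728 * T := le_of_mul_le_mul_right this hq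
    have : n * K ^ 2 * 2 ^ 12 ≤ n * K ^ 2 * q := by gcongr
    linarith
  have circuit_part : T ^ 2 ≤ 2 * n * Q := by
    have : n * K ^ 2 * T ≤ T / 2 * T := by gcongr
    linarith
  have : n ^ 5 * n ≤ 1179648 * q ^ 2 * Q * n :=
    calc n ^ 5 * n = (n ^ 3) ^ 2 := by ring
      _ ≤ (768 * q * T) ^ 2 := by gcongr
      _ = 768 ^ 2 * q ^ 2 * T ^ 2 := by ring
      _ ≤ 768 ^ 2 * q ^ 2 * (2 * n * Q) := by gcongr
      _ = 1179648 * q ^ 2 * Q * n := by ring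
  refine le_of_mul_le_mul_right ?_ (by positivity : 0 < 2 ^ 24 * q)
  calc n ^ 4 * (2 ^ 24 * q) ≤ n ^ 4 * n := by gcongr
    _ ≤ 1179648 * q ^ 2 * Q := le_of_mul_le_mul_right (by linarith) hn
    _ ≤ 2 ^ 31 * q ^ 2 * Q := by gcongr; norm_num
    _ = 128 * Q * q * (2 ^ 24 * q) := by ring

section Hyperplanes

variable {F V : Type*} [Field F] [AddCommGroup V] [Module F V] {n : ℕ}

open scoped Classical in
/-- The part of `s` on the hyperplane `φ x = a` encoded by the pair `(φ, a)`. Every hyperplane is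
encoded by `q - 1` pairs, and the pairs `(0, a)`, which do not encode hyperplanes, have `s` or `∅`
as section. -/
noncomputable def hyperplaneSection (s : Finset V) (H : Module.Dual F V × F) : Finset V :=
  {x ∈ s | H.1 x = H.2}

theorem mem_hyperplaneSection {s : Finset V} {H : Module.Dual F V × F} {x : V} :
    x ∈ hyperplaneSection s H ↔ x ∈ s ∧ H.1 x = H.2 := by
  simp [hyperplaneSection]

theorem vectorSpan_le_ker_of_forall_eq {s : Set V} {φ : Module.Dual F V} {a : F}
    (h : ∀ x ∈ s, φ x = a) : vectorSpan F s ≤ φ.ker := by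
  rw [vectorSpan_def, Submodule.span_le]
  rintro - ⟨x, hx, y, hy, rfl⟩
  simp [h x hx, h y hy]

theorem coplanar_hyperplaneSection (hV : Module.finrank F V = 3) (s : Finset V)
    {H : Module.Dual F V × F} (hH : H.1 ≠ 0) : Coplanar F (hyperplaneSection s H : Set V) := by
  have := Module.finite_of_finrank_eq_succ hV
  have hker := Module.Dual.finrank_ker_add_one_of_ne_zero hH
  rw [coplanar_iff_finrank_le_two]
  calc Module.finrank F (vectorSpan F (hyperplaneSection s H : Set V))
      ≤ Module.finrank F H.1.ker :=
        Submodule.finrank_mono (vectorSpan_le_ker_of_forall_eq fun x hx ↦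
          (mem_hyperplaneSection.1 hx).2)
    _ ≤ 2 := by lia

theorem mem_dualAnnihilator_vectorSpan_range {p : Fin (n + 1) → V} {φ : Module.Dual F V} :
    φ ∈ (vectorSpan F (Set.range p)).dualAnnihilator ↔ ∀ i, φ (p i) = φ (p 0) := by
  refine ⟨fun h i ↦ ?_, fun h ↦ ?_⟩
  · have := (Submodule.mem_dualAnnihilator φ).1 h _
      (vsub_mem_vectorSpan F (Set.mem_range_self i) (Set.mem_range_self 0))
    rwa [vsub_eq_sub, map_sub, sub_eq_zero] at this
  · have hker := vectorSpan_le_ker_of_forall_eq (Set.forall_mem_range.2 h)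
    exact (Submodule.mem_dualAnnihilator φ).2 fun w hw ↦ hker hw

variable [Fintype F] [FiniteDimensional F V]

noncomputable local instance : Fintype (Module.Dual F V) :=
  have := Module.finite_of_finite F (M := Module.Dual F V)
  .ofFinite _

theorem card_hyperplanes :
    Fintype.card (Module.Dual F V × F) = Fintype.card F ^ (Module.finrank F V + 1) := by
  rw [Fintype.card_prod, Module.card_eq_pow_finrank (K := F), Subspace.dual_finrank_eq, pow_succ]

theorem card_hyperplanes_through [DecidableEq F] {p : Fin (n + 1) → V}
    (hp : AffineIndependent F p) :
    #{H : Module.Dual F V × F | ∀ i, H.1 (p i) = H.2}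
      = Fintype.card F ^ (Module.finrank F V - n) := by
  set W : Subspace F (Module.Dual F V) := (vectorSpan F (Set.range p)).dualAnnihilator
  have hrank : Module.finrank F W = Module.finrank F V - n := by
    have := Subspace.finrank_add_finrank_dualAnnihilator_eq (vectorSpan F (Set.range p))
    rw [hp.finrank_vectorSpan (Fintype.card_fin _)] at this
    exact Nat.eq_sub_of_add_eq' this
  have hcard : Nat.card W = Fintype.card F ^ (Module.finrank F V - n) := by
    rw [← hrank, ← Nat.card_eq_fintype_card]
    exact Module.natCard_eq_pow_finrank (K := F) (V := W)
  rw [← hcard, ← Fintype.card_subtype, ← Nat.card_eq_fintype_card]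
  exact Nat.card_congr
    { toFun H := ⟨H.1.1, mem_dualAnnihilator_vectorSpan_range.2 fun i ↦ by rw [H.2, H.2]⟩
      invFun φ := ⟨(φ.1, φ.1 (p 0)), mem_dualAnnihilator_vectorSpan_range.1 φ.2⟩
      left_inv H := Subtype.ext (Prod.ext rfl (H.2 0))
      right_inv φ := rfl }

theorem card_filter_hyperplanes_through_le [DecidableEq F] {m : ℕ}
    (B : Finset (Module.Dual F V × F)) {p : Fin m → V} {e : Fin (n + 1) → Fin m}
    (hp : AffineIndependent F (p ∘ e)) :
    #{H ∈ B | ∀ i, H.1 (p i) = H.2} ≤ Fintype.card F ^ (Module.finrank F V - n) := by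
  rw [← card_hyperplanes_through hp]
  refine card_le_card fun H hH ↦ ?_
  simpa using fun i ↦ (mem_filter.1 hH).2 (e i)

theorem sum_card_hyperplaneSection (s : Finset V) :
    ∑ H : Module.Dual F V × F, #(hyperplaneSection s H)
      = #s * Fintype.card F ^ Module.finrank F V := by
  classical
  have through (x : V) : #{H : Module.Dual F V × F | H.1 x = H.2}
      = Fintype.card F ^ Module.finrank F V := by
    simpa using card_hyperplanes_through (n := 0) (affineIndependent_of_subsingleton F ![x])
  calc ∑ H : Module.Dual F V × F, #(hyperplaneSection s H)
      = ∑ x ∈ s, #{H : Module.Dual F V × F | H.1 x = H.2} :=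
        sum_card_bipartiteAbove_eq_sum_card_bipartiteBelow
          fun (H : Module.Dual F V × F) (x : V) ↦ H.1 x = H.2
    _ = _ := by simp [through]

theorem sum_card_hyperplaneSection_sq (s : Finset V) :
    ∑ H : Module.Dual F V × F, #(hyperplaneSection s H) ^ 2
      = #s * Fintype.card F ^ Module.finrank F V
        + (#s * #s - #s) * Fintype.card F ^ (Module.finrank F V - 1) := by
  classical
  have through_pair {x : V × V} (hx : x ∈ s.offDiag) :
      #{H : Module.Dual F V × F | H.1 x.1 = H.2 ∧ H.1 x.2 = H.2}
        = Fintype.card F ^ (Module.finrank F V - 1) := by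
    simpa [Fin.forall_fin_two] using card_hyperplanes_through
      (affineIndependent_of_ne F (mem_offDiag.1 hx).2.2)
  have sq_eq (H : Module.Dual F V × F) : #(hyperplaneSection s H) ^ 2
      = #(hyperplaneSection s H) + #{x ∈ s.offDiag | H.1 x.1 = H.2 ∧ H.1 x.2 = H.2} := by
    have hoff : (hyperplaneSection s H).offDiag
        = {x ∈ s.offDiag | H.1 x.1 = H.2 ∧ H.1 x.2 = H.2} := by
      ext x
      simp only [mem_offDiag, mem_hyperplaneSection, mem_filter]
      tauto
    rw [← hoff, offDiag_card, sq, Nat.add_sub_cancel' (Nat.le_mul_self _)]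
  simp only [sq_eq, sum_add_distrib, sum_card_hyperplaneSection]
  congr 1
  calc ∑ H : Module.Dual F V × F, #{x ∈ s.offDiag | H.1 x.1 = H.2 ∧ H.1 x.2 = H.2}
      = ∑ x ∈ s.offDiag, #{H : Module.Dual F V × F | H.1 x.1 = H.2 ∧ H.1 x.2 = H.2} :=
        sum_card_bipartiteAbove_eq_sum_card_bipartiteBelow
          fun (H : Module.Dual F V × F) (x : V × V) ↦ H.1 x.1 = H.2 ∧ H.1 x.2 = H.2
    _ = _ := by rw [sum_congr rfl fun x hx ↦ through_pair hx, sum_const, smul_eq_mul, offDiag_card]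

theorem sum_card_hyperplaneSection_sub_sq_le [Nontrivial V] (s : Finset V) :
    ∑ H : Module.Dual F V × F, ((#(hyperplaneSection s H) : ℝ) - #s / Fintype.card F) ^ 2
      ≤ #s * Fintype.card F ^ Module.finrank F V := by
  obtain ⟨d, hd⟩ := Nat.exists_eq_add_of_lt (Module.finrank_pos (R := F) (M := V))
  have hq : (Fintype.card F : ℝ) ≠ 0 := Nat.cast_ne_zero.2 Fintype.card_ne_zero
  have hss : #s ≤ #s * #s := Nat.le_mul_self _
  have first := congrArg (Nat.cast (R := ℝ)) (sum_card_hyperplaneSection (F := F) s)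
  have second := congrArg (Nat.cast (R := ℝ)) (sum_card_hyperplaneSection_sq (F := F) s)
  rw [zero_add] at hd
  rw [hd, Nat.add_sub_cancel] at second
  rw [hd] at first ⊢
  push_cast [Nat.cast_sub hss] at first second
  calc ∑ H : Module.Dual F V × F, ((#(hyperplaneSection s H) : ℝ) - #s / Fintype.card F) ^ 2
      = ∑ H : Module.Dual F V × F, (#(hyperplaneSection s H) : ℝ) ^ 2
          - 2 * (#s / Fintype.card F) * ∑ H : Module.Dual F V × F, (#(hyperplaneSection s H) : ℝ)
          + Fintype.card (Module.Dual F V × F) * (#s / Fintype.card F : ℝ) ^ 2 := by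
        simp only [sub_sq, sum_add_distrib, sum_sub_distrib, mul_sum, sum_const, card_univ,
          nsmul_eq_mul]
        congr 2
        exact sum_congr rfl fun H _ ↦ by ring
    _ = #s * Fintype.card F ^ (d + 1) - #s * Fintype.card F ^ d := by
        rw [first, second, card_hyperplanes, hd]
        push_cast
        field_simp
        ring
    _ ≤ #s * Fintype.card F ^ (d + 1) := sub_le_self _ (by positivity)

/-- The hyperplanes whose section of `s` has a size differing from its average `#s / q` by at most
half of that average. -/
noncomputable def balancedHyperplanes (F : Type*) {V : Type*} [Field F] [AddCommGroup V]
    [Module F V] [Fintype F] [FiniteDimensional F V] (s : Finset V) :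
    Finset (Module.Dual F V × F) :=
  {H | |(#(hyperplaneSection s H) : ℝ) - #s / Fintype.card F| ≤ #s / Fintype.card F / 2}

theorem mem_balancedHyperplanes {s : Finset V} {H : Module.Dual F V × F} :
    H ∈ balancedHyperplanes F s ↔
      #s / Fintype.card F / 2 ≤ (#(hyperplaneSection s H) : ℝ) ∧
        (#(hyperplaneSection s H) : ℝ) ≤ 3 / 2 * (#s / Fintype.card F) := by
  rw [balancedHyperplanes, mem_filter_univ, abs_le]
  constructor <;> rintro ⟨h₁, h₂⟩ <;> constructor <;> linarith

theorem fst_ne_zero_of_mem_balancedHyperplanes {s : Finset V} (hs : s.Nonempty)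
    {H : Module.Dual F V × F} (hH : H ∈ balancedHyperplanes F s) : H.1 ≠ 0 := by
  intro h0
  obtain ⟨hlow, hupp⟩ := mem_balancedHyperplanes.1 hH
  have hn : (0 : ℝ) < #s := Nat.cast_pos.2 hs.card_pos
  have hq : (2 : ℝ) ≤ Fintype.card F := by exact_mod_cast Fintype.one_lt_card (α := F)
  have hr : (#s : ℝ) / Fintype.card F ≤ #s / 2 := by gcongr
  have hr0 : (0 : ℝ) < #s / Fintype.card F := by positivity
  obtain ha | ha := eq_or_ne H.2 0
  · have hall : hyperplaneSection s H = s := by simp [hyperplaneSection, h0, ha]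
    rw [hall] at hupp
    linarith
  · have hnone : hyperplaneSection s H = ∅ := by simp [hyperplaneSection, h0, ha.symm]
    rw [hnone, card_empty, Nat.cast_zero] at hlow
    linarith

theorem le_two_mul_card_balancedHyperplanes [Nontrivial V] {s : Finset V}
    (hs : 8 * Fintype.card F ≤ #s) :
    Fintype.card F ^ (Module.finrank F V + 1) ≤ 2 * #(balancedHyperplanes F s) := by
  set q := Fintype.card F
  set r : ℝ := #s / q with hr
  set U : Finset (Module.Dual F V × F) := {H | r / 2 < |(#(hyperplaneSection s H) : ℝ) - r|}
    with hU
  have hq : (0 : ℝ) < q := Nat.cast_pos.2 Fintype.card_pos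
  have hn : 8 * (q : ℝ) ≤ #s := by exact_mod_cast hs
  have split : #(balancedHyperplanes F s) + #U = q ^ (Module.finrank F V + 1) := by
    rw [← card_hyperplanes, ← card_univ, ← card_filter_add_card_filter_not (s := univ)
      fun H : Module.Dual F V × F ↦ |(#(hyperplaneSection s H) : ℝ) - r| ≤ r / 2]
    simp only [not_le]
    rfl
  have chebyshev : #U * (r / 2) ^ 2 ≤ #s * (q : ℝ) ^ Module.finrank F V :=
    (card_filter_lt_abs_sub_mul_sq_le _ r (by positivity)).trans
      (sum_card_hyperplaneSection_sub_sq_le s)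
  have hU_le : 2 * (#U : ℝ) ≤ (q : ℝ) ^ (Module.finrank F V + 1) := by
    have : (#s : ℝ) = r * q := by rw [hr]; field_simp
    have hr8 : 8 ≤ r := (le_div_iff₀ hq).2 hn
    rw [this] at chebyshev
    have h₁ : #U * r ≤ 4 * (q : ℝ) ^ (Module.finrank F V + 1) := by
      rw [pow_succ]
      exact le_of_mul_le_mul_right (by linarith) (by linarith : 0 < r)
    nlinarith
  have : 2 * #U ≤ q ^ (Module.finrank F V + 1) := by exact_mod_cast hU_le
  lia

theorem sum_card_affineCircuits_hyperplaneSection_le (s : Finset V)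
    (B : Finset (Module.Dual F V × F)) :
    ∑ H ∈ B, #(affineCircuits F (n + 1) (hyperplaneSection s H))
      ≤ #(affineCircuits F (n + 1) s) * Fintype.card F ^ (Module.finrank F V - n) := by
  classical
  refine le_trans (sum_le_sum fun H _ ↦ card_le_card fun p hp ↦ ?_)
    (sum_card_filter_le (fun H p ↦ ∀ i, H.1 (p i) = H.2) fun p hp ↦
      card_filter_hyperplanes_through_le (e := (0 : Fin (n + 2)).succAbove) B
        ((mem_affineCircuits.1 hp).2.2 0))
  simp only [mem_affineCircuits, mem_hyperplaneSection, mem_filter, forall_and] at hp ⊢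
  tauto

theorem sum_card_collinearTriples_balanced_le (s : Finset V) :
    ∑ H ∈ balancedHyperplanes F s, #(collinearTriples F (hyperplaneSection s H))
      ≤ #(sparseCollinearTriples F s (3 * #s / (2 * Fintype.card F)))
        * Fintype.card F ^ (Module.finrank F V - 1) := by
  classical
  refine le_trans (sum_le_sum fun H hH ↦ card_le_card fun t ht ↦ ?_)
    (sum_card_filter_le (fun H t ↦ ∀ i, H.1 (t i) = H.2) fun t ht ↦
      card_filter_hyperplanes_through_le (e := ![(0 : Fin 3), 1]) _ ?_)
  · simp only [mem_collinearTriples, mem_hyperplaneSection, forall_and] at ht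
    refine mem_filter.2 ⟨mem_sparseCollinearTriples.2
      ⟨mem_collinearTriples.2 ⟨ht.1.1, ht.2⟩, ?_⟩, ht.1.2⟩
    have line_subset :
        ({x ∈ s | x ∈ line[F, t 0, t 1]} : Finset V) ⊆ hyperplaneSection s H := by
      intro x hx
      obtain ⟨hxs, hx⟩ := mem_filter.1 hx
      obtain ⟨c, rfl⟩ := mem_affineSpan_pair_iff_exists_lineMap_eq.1 hx
      refine mem_hyperplaneSection.2 ⟨hxs, ?_⟩
      simp [AffineMap.lineMap_apply, ht.1.2]
    refine (card_le_card line_subset).trans ?_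
    have hupp := (mem_balancedHyperplanes.1 hH).2
    rw [Nat.le_div_iff_mul_le (by positivity)]
    rw [div_mul_div_comm, le_div_iff₀ (by positivity)] at hupp
    exact_mod_cast hupp
  · have ht01 : t 0 ≠ t 1 :=
      (mem_collinearTriples.1 (mem_sparseCollinearTriples.1 ht).1).2.1.ne (by decide)
    convert affineIndependent_of_ne F ht01 using 1
    ext i; fin_cases i <;> rfl

theorem pow_four_le_of_mem_balancedHyperplanes (hV : Module.finrank F V = 3) {s : Finset V}
    (hs : 96 * Fintype.card F ≤ #s) {H : Module.Dual F V × F} (hH : H ∈ balancedHyperplanes F s) :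
    (#s / Fintype.card F : ℝ) ^ 4 ≤ 32 * #(affineCircuits F 3 (hyperplaneSection s H))
      + 192 * (#s / Fintype.card F) * #(collinearTriples F (hyperplaneSection s H)) := by
  have hq : 0 < Fintype.card F := Fintype.card_pos
  have hsne : s.Nonempty := card_pos.1 (by lia)
  obtain ⟨hlow, hupp⟩ := mem_balancedHyperplanes.1 hH
  have hplane : (#(hyperplaneSection s H) : ℝ) ^ 4
      ≤ #(affineCircuits F 3 (hyperplaneSection s H)) + 24 * #(hyperplaneSection s H) ^ 3
        + 4 * #(hyperplaneSection s H) * #(collinearTriples F (hyperplaneSection s H)) := by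
    exact_mod_cast card_pow_four_le_of_coplanar (coplanar_hyperplaneSection hV s
      (fst_ne_zero_of_mem_balancedHyperplanes hsne hH))
  set N : ℝ := (#(hyperplaneSection s H) : ℝ)
  set r : ℝ := #s / Fintype.card F
  set C : ℝ := (#(collinearTriples F (hyperplaneSection s H)) : ℝ)
  have hr : 96 ≤ r := (le_div_iff₀ (Nat.cast_pos.2 hq)).2 (by exact_mod_cast hs)
  have hcube : 24 * N ^ 3 ≤ N ^ 4 / 2 := by
    have : 0 ≤ N ^ 3 * (N - 48) := mul_nonneg (by positivity) (by linarith)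
    linarith
  have hNC : N * C ≤ 3 / 2 * r * C := by gcongr
  have hrN : r ^ 4 ≤ 16 * N ^ 4 :=
    calc r ^ 4 ≤ (2 * N) ^ 4 := by gcongr; linarith
      _ = 16 * N ^ 4 := by ring
  linarith

theorem card_pow_four_le_add_card_sparseCollinearTriples (hV : Module.finrank F V = 3)
    {s : Finset V} (hs : 96 * Fintype.card F ≤ #s) :
    (#s : ℝ) ^ 4 ≤ 64 * #(affineCircuits F 3 s) * Fintype.card F
      + 384 * #s * Fintype.card F
        * #(sparseCollinearTriples F s (3 * #s / (2 * Fintype.card F))) := by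
  have : Nontrivial V := Module.nontrivial_of_finrank_pos (R := F) (by lia)
  set q := Fintype.card F
  set T := sparseCollinearTriples F s (3 * #s / (2 * q))
  set B := balancedHyperplanes F s
  have hq : (0 : ℝ) < q := Nat.cast_pos.2 Fintype.card_pos
  have many_balanced : (q : ℝ) ^ 4 ≤ 2 * #B := by
    have := le_two_mul_card_balancedHyperplanes (F := F) (s := s) (by lia)
    rw [hV] at this
    exact_mod_cast this
  have circuits : ∑ H ∈ B, (#(affineCircuits F 3 (hyperplaneSection s H)) : ℝ)
      ≤ #(affineCircuits F 3 s) * q := by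
    have := sum_card_affineCircuits_hyperplaneSection_le (n := 2) s B
    rw [hV, pow_one] at this
    exact_mod_cast this
  have triples : ∑ H ∈ B, (#(collinearTriples F (hyperplaneSection s H)) : ℝ) ≤ #T * q ^ 2 := by
    have := sum_card_collinearTriples_balanced_le (F := F) s
    rw [hV] at this
    exact_mod_cast this
  calc (#s : ℝ) ^ 4 = q ^ 4 * (#s / q : ℝ) ^ 4 := by field_simp
    _ ≤ 2 * #B * (#s / q : ℝ) ^ 4 := by gcongr
    _ = 2 * ∑ H ∈ B, (#s / q : ℝ) ^ 4 := by rw [sum_const, nsmul_eq_mul, mul_assoc]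
    _ ≤ 2 * ∑ H ∈ B, (32 * #(affineCircuits F 3 (hyperplaneSection s H))
          + 192 * (#s / q) * #(collinearTriples F (hyperplaneSection s H)) : ℝ) := by
        gcongr with H hH
        exact pow_four_le_of_mem_balancedHyperplanes hV hs hH
    _ = 64 * ∑ H ∈ B, (#(affineCircuits F 3 (hyperplaneSection s H)) : ℝ)
          + 384 * (#s / q) * ∑ H ∈ B, (#(collinearTriples F (hyperplaneSection s H)) : ℝ) := by
        rw [sum_add_distrib, ← mul_sum, ← mul_sum]
        ring
    _ ≤ 64 * (#(affineCircuits F 3 s) * q) + 384 * (#s / q) * (#T * q ^ 2) := by gcongr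
    _ = 64 * #(affineCircuits F 3 s) * q + 384 * #s * q * #T := by field_simp

theorem card_le_card_pow_finrank (s : Finset V) :
    #s ≤ Fintype.card F ^ Module.finrank F V := by
  have := Module.finite_of_finite F (M := V)
  have := Fintype.ofFinite V
  rw [← Module.card_eq_pow_finrank]
  exact card_le_univ s

theorem card_pow_four_le_of_le_card_sparseCollinearTriples (hV : Module.finrank F V = 3)
    {s : Finset V} (hs : 2 ^ 24 * Fintype.card F ≤ #s)
    (hT : (#s : ℝ) ^ 3 ≤ 768 * Fintype.card F
      * #(sparseCollinearTriples F s (3 * #s / (2 * Fintype.card F)))) :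
    (#s : ℝ) ^ 4 ≤ 128 * #(affineCircuits F 3 s) * Fintype.card F := by
  set K := 3 * #s / (2 * Fintype.card F)
  have hK : (K : ℝ) * Fintype.card F ≤ 3 / 2 * #s := by
    have : (K : ℝ) * (2 * Fintype.card F) ≤ 3 * #s := by
      exact_mod_cast Nat.div_mul_le_self (3 * #s) (2 * Fintype.card F)
    linarith
  refine pow_four_le_of_sq_le_mul (Nat.cast_pos.2 Fintype.card_pos) K.cast_nonneg
    (Nat.cast_nonneg _) (Nat.cast_nonneg _) (by exact_mod_cast hs) ?_ hK hT ?_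
  · exact_mod_cast hV ▸ card_le_card_pow_finrank (F := F) s
  · exact_mod_cast card_sparseCollinearTriples_sq_le (k := F) s K

theorem card_pow_four_le_card_affineCircuits (hV : Module.finrank F V = 3) {s : Finset V}
    (hs : 2 ^ 24 * Fintype.card F ≤ #s) :
    (#s : ℝ) ^ 4 ≤ 128 * #(affineCircuits F 3 s) * Fintype.card F := by
  set T : ℝ := (#(sparseCollinearTriples F s (3 * #s / (2 * Fintype.card F))) : ℝ)
  obtain hT | hT := le_total ((#s : ℝ) ^ 3) (768 * Fintype.card F * T)
  · exact card_pow_four_le_of_le_card_sparseCollinearTriples hV hs hT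
  · have planes := card_pow_four_le_add_card_sparseCollinearTriples hV (by lia : 96 * _ ≤ #s)
    have : #s * (768 * Fintype.card F * T) ≤ (#s : ℝ) * #s ^ 3 := by gcongr
    linarith

end Hyperplanes

section CriticalCoplanar

variable {F : Type*} [Field F]

theorem IsAffineCircuit.isCriticalCoplanar [DecidableEq F] {p : Fin 4 → Fin 3 → F}
    (hp : IsAffineCircuit F p) : IsCriticalCoplanar F (univ.image p) := by
  refine ⟨by rw [card_image_of_injective _ hp.injective, card_fin], fun h ↦ hp.1 ?_,
    fun s hs ↦ ?_⟩
  · exact h.comp_embedding ⟨fun i ↦ ⟨p i, mem_image_of_mem p (mem_univ i)⟩,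
      fun i j hij ↦ hp.injective (congrArg Subtype.val hij)⟩
  · obtain ⟨x, hx, hxs⟩ := exists_of_ssubset hs
    obtain ⟨i, -, rfl⟩ := mem_image.1 hx
    refine (hp.2 i).range.mono fun y hy ↦ ?_
    obtain ⟨j, -, rfl⟩ := mem_image.1 (hs.subset hy)
    obtain ⟨l, rfl⟩ := Fin.exists_succAbove_eq (x := j) (y := i) fun hji ↦ hxs (hji ▸ hy)
    exact ⟨l, rfl⟩

theorem card_affineCircuits_le_ncard_isCriticalCoplanar (s : Finset (Fin 3 → F)) :
    #(affineCircuits F 3 s) ≤ 4 ^ 4 * {t | t ⊆ s ∧ IsCriticalCoplanar F t}.ncard := by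
  classical
  have hcoe : {t | t ⊆ s ∧ IsCriticalCoplanar F t}
      = ({t ∈ s.powerset | IsCriticalCoplanar F t} : Finset _) := by
    ext t
    simp
  rw [hcoe, Set.ncard_coe_finset]
  refine card_le_mul_card_image_of_maps_to (f := fun p ↦ univ.image p) (fun p hp ↦ ?_) _
    fun t ht ↦ ?_
  · obtain ⟨hps, hp⟩ := mem_affineCircuits.1 hp
    exact mem_filter.2 ⟨mem_powerset.2 (image_subset_iff.2 fun i _ ↦ hps i), hp.isCriticalCoplanar⟩
  · calc #{p ∈ affineCircuits F 3 s | univ.image p = t}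
        ≤ #(Fintype.piFinset fun _ : Fin 4 ↦ t) := by
          refine card_le_card fun p hp ↦ Fintype.mem_piFinset.2 fun i ↦ ?_
          rw [← (mem_filter.1 hp).2]
          exact mem_image_of_mem p (mem_univ i)
      _ = 4 ^ 4 := by rw [Fintype.card_piFinset_const, (mem_filter.1 ht).2.1]

end CriticalCoplanar

end AffineCircuit

/-- There are absolute constants `c, c′ > 0` such that every
`P ⊆ 𝔽_q³` with `|P| ≥ c·q` contains at least `c′·|P|⁴/q` critical coplanar
`4`-element subsets. -/
theorem supersaturation_critical_coplanar_Fq3 :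
    ∃ c : ℝ, 0 < c ∧ ∃ c' : ℝ, 0 < c' ∧ ∀ q : ℕ, IsPrimePow q →
      ∀ (F : Type) [Field F] [Fintype F], Fintype.card F = q →
        ∀ P : Finset (Fin 3 → F), c * (q : ℝ) ≤ (P.card : ℝ) →
          c' * (P.card : ℝ) ^ 4 / (q : ℝ)
            ≤ (({t : Finset (Fin 3 → F) | t ⊆ P ∧
                  IsCriticalCoplanar F t}).ncard : ℝ) := by
  refine ⟨2 ^ 24, by norm_num, 1 / 2 ^ 15, by norm_num, ?_⟩
  rintro - - F _ _ rfl P hP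
  have hq : (0 : ℝ) < Fintype.card F := Nat.cast_pos.2 Fintype.card_pos
  have circuits := AffineCircuit.card_pow_four_le_card_affineCircuits (F := F)
    (Module.finrank_fin_fun F) (s := P) (by exact_mod_cast hP)
  have sets : (#(AffineCircuit.affineCircuits F 3 P) : ℝ)
      ≤ 4 ^ 4 * {t | t ⊆ P ∧ IsCriticalCoplanar F t}.ncard := by
    exact_mod_cast AffineCircuit.card_affineCircuits_le_ncard_isCriticalCoplanar P
  rw [div_le_iff₀ hq]
  set N : ℝ := ({t | t ⊆ P ∧ IsCriticalCoplanar F t}.ncard : ℝ)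
  calc 1 / 2 ^ 15 * (#P : ℝ) ^ 4
      ≤ 1 / 2 ^ 15 * (128 * #(AffineCircuit.affineCircuits F 3 P) * Fintype.card F) := by gcongr
    _ ≤ 1 / 2 ^ 15 * (128 * (4 ^ 4 * N) * Fintype.card F) := by gcongr
    _ = N * Fintype.card F := by ring
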